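/- Fix q ∈ (0,1] and let x ∼ N(0,1). Then lim_{u→0} E_x[f_x(u)] / u⁴ = (1/4)(1−q)²q². In particular E_x[f_x(u)] = O(u⁴) as u → 0. -/

import Mathlib

/-!
The mixture `q φ(x - (1 - q)u) + (1 - q) φ(x + q u)` has density
`L_u(x) = q e^{s x - s²/2} + (1 - q) e^{t x - t²/2}` with respect to `N(0,1)`, where `s = (1 - q)u`
and `t = -q u`, and `E[f_x(u)] = -E[log L_u]` is the relative entropy of `N(0,1)` with respect to
it. The two shifts have mean zero, so the terms of order `u` cancel and
`L_u(x) = 1 + u² m (x² - 1)/2 + o(u²)` with `m = q(1 - q)² + (1 - q)q² = q(1 - q)`. Since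
`E[L_u] = 1`, the relative entropy is `E[L_u - 1 - log L_u]`, whose integrand is
`(L_u - 1)²/2` to leading order. By dominated convergence it is asymptotic to
`u⁴ (m²/8) E[(x² - 1)²] = u⁴ m²/4`.
-/

open MeasureTheory ProbabilityTheory Real

/-- The standard normal density `φ(t) = (2π)^{−1/2}·e^{−t²/2}`. -/
noncomputable def stdphi (t : ℝ) : ℝ := (Real.sqrt (2 * π))⁻¹ * Real.exp (-t ^ 2 / 2)

/-- `f_x(u) = ln( φ(x) / ( q·φ(x − (1−q)u) + (1−q)·φ(x + qu) ) )`. -/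
noncomputable def fX (q x u : ℝ) : ℝ :=
  Real.log (stdphi x / (q * stdphi (x - (1 - q) * u) + (1 - q) * stdphi (x + q * u)))

open Filter Topology Asymptotics

section LogRemainder

lemma abs_sub_one_sub_log_le {y c : ℝ} (hc : 0 < c) (hcy : c ≤ y) :
    |y - 1 - log y| ≤ (y - 1) ^ 2 / c := by
  have hy : 0 < y := hc.trans_le hcy
  rw [abs_of_nonneg (sub_nonneg.2 (log_le_sub_one_of_pos hy))]
  calc
    y - 1 - log y ≤ y - 1 - (1 - y⁻¹) := by gcongr; exact one_sub_inv_le_log_of_pos hy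
    _ = (y - 1) ^ 2 / y := by field
    _ ≤ (y - 1) ^ 2 / c := by gcongr

lemma sub_one_sub_log_sub_sq_half_isLittleO :
    (fun y : ℝ ↦ y - 1 - log y - (y - 1) ^ 2 / 2) =o[𝓝 1] fun y ↦ (y - 1) ^ 2 := by
  have hcube : (fun y : ℝ ↦ y - 1 - log y - (y - 1) ^ 2 / 2) =O[𝓝 1] fun y ↦ (y - 1) ^ 3 := by
    refine IsBigO.of_bound 2 ?_
    filter_upwards [Metric.closedBall_mem_nhds (1 : ℝ) one_half_pos] with y hy
    rw [Metric.mem_closedBall, dist_comm, dist_eq] at hy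
    have htaylor := abs_log_sub_add_sum_range_le (x := 1 - y) (by linarith) 2
    simp only [Finset.sum_range_succ, Finset.sum_range_zero, Nat.cast_zero, Nat.cast_one, zero_add,
      pow_one, div_one, one_add_one_eq_two, Nat.reduceAdd, sub_sub_cancel] at htaylor
    calc ‖y - 1 - log y - (y - 1) ^ 2 / 2‖
        = |1 - y + (1 - y) ^ 2 / 2 + log y| := by rw [norm_eq_abs, ← abs_neg]; congr 1; ring
      _ ≤ |1 - y| ^ 3 / (1 - |1 - y|) := htaylor
      _ ≤ |1 - y| ^ 3 / (1 / 2) := by gcongr; linarith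
      _ = 2 * ‖(y - 1) ^ 3‖ := by rw [norm_eq_abs, abs_pow, abs_sub_comm]; ring
  have hshift : Tendsto (fun y : ℝ ↦ y - 1) (𝓝 1) (𝓝 0) :=
    Continuous.tendsto' (by fun_prop) _ _ (sub_self 1)
  exact hcube.trans_isLittleO ((isLittleO_pow_pow (by norm_num)).comp_tendsto hshift)

lemma tendsto_sub_one_sub_log_div_sq {κ : Type*} {l : Filter κ} {y ε : κ → ℝ} {h : ℝ}
    (hε : Tendsto ε l (𝓝[≠] 0)) (hy : Tendsto (fun k ↦ (y k - 1) / ε k) l (𝓝 h)) :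
    Tendsto (fun k ↦ (y k - 1 - log (y k)) / ε k ^ 2) l (𝓝 (h ^ 2 / 2)) := by
  have hε_ne : ∀ᶠ k in l, ε k ≠ 0 := hε.eventually self_mem_nhdsWithin
  have hO : (fun k ↦ y k - 1) =O[l] ε :=
    isBigO_of_div_tendsto_nhds (hε_ne.mono fun k hk h0 ↦ absurd h0 hk) h hy
  have hy_one : Tendsto y l (𝓝 1) := by
    simpa using (hO.trans_tendsto (hε.mono_right nhdsWithin_le_nhds)).add_const 1
  have hrem : Tendsto (fun k ↦ (y k - 1 - log (y k) - (y k - 1) ^ 2 / 2) / ε k ^ 2) l (𝓝 0) :=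
    ((sub_one_sub_log_sub_sq_half_isLittleO.comp_tendsto hy_one).trans_isBigO
      (hO.pow 2)).tendsto_div_nhds_zero
  convert hrem.add ((hy.pow 2).div_const 2) using 2 with k
  · ring
  · ring

end LogRemainder

section ExpRemainder

lemma abs_exp_sub_one_sub_id_le_sq_mul_exp_abs (y : ℝ) : |exp y - 1 - y| ≤ |y| ^ 2 * exp |y| := by
  have h := Complex.norm_exp_sub_sum_le_norm_mul_exp (y : ℂ) 2
  simp only [Finset.sum_range_succ, Finset.sum_range_zero, pow_zero, pow_one, zero_add,
    Nat.factorial_zero, Nat.factorial_one, Nat.cast_one, div_one, ← sub_sub] at h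
  exact_mod_cast h

lemma abs_mul_sub_sq_half_le {s : ℝ} (hs : |s| ≤ 1) (x : ℝ) :
    |s * x - s ^ 2 / 2| ≤ |s| * (|x| + 1) :=
  calc |s * x - s ^ 2 / 2| ≤ |s * x| + |s ^ 2 / 2| := abs_sub _ _
    _ = |s| * (|x| + |s| / 2) := by rw [abs_mul, abs_div, abs_pow, abs_two]; ring
    _ ≤ |s| * (|x| + 1) := by gcongr; linarith [abs_nonneg s]

lemma sq_mul_exp_le {a : ℝ} (ha : 0 ≤ a) : a ^ 2 * exp a ≤ exp (3 * a) :=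
  calc a ^ 2 * exp a ≤ exp a ^ 2 * exp a := by gcongr; linarith [add_one_le_exp a]
    _ = exp (3 * a) := by rw [← pow_succ, ← exp_nat_mul]; norm_num

end ExpRemainder

section RelativeEntropy

variable {α κ : Type*} [MeasurableSpace α] {μ : Measure α}

lemma integrable_sub_one_sub_log {f : α → ℝ} {c : ℝ} (hc : 0 < c)
    (hf_ge : ∀ᵐ x ∂μ, c ≤ f x) (hf_meas : AEMeasurable f μ) (hf : MemLp (fun x ↦ f x - 1) 2 μ) :
    Integrable (fun x ↦ f x - 1 - log (f x)) μ := by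
  refine (hf.integrable_sq.div_const c).mono' ?_ ?_
  · exact ((hf_meas.sub_const 1).sub hf_meas.log).aestronglyMeasurable
  · filter_upwards [hf_ge] with x hx using abs_sub_one_sub_log_le hc hx

lemma integral_neg_log_eq [IsProbabilityMeasure μ] {f : α → ℝ} {c : ℝ} (hc : 0 < c)
    (hf_ge : ∀ᵐ x ∂μ, c ≤ f x) (hf : MemLp (fun x ↦ f x - 1) 2 μ) (hf_one : ∫ x, f x ∂μ = 1) :
    ∫ x, -log (f x) ∂μ = ∫ x, f x - 1 - log (f x) ∂μ := by
  have hf_int : Integrable f μ := integrable_of_integral_eq_one hf_one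
  have hrem := integrable_sub_one_sub_log hc hf_ge hf_int.aemeasurable hf
  have hsub_int : Integrable (fun x ↦ f x - 1) μ := hf_int.sub (integrable_const 1)
  have hsub : ∫ x, f x - 1 ∂μ = 0 := by simp [integral_sub hf_int (integrable_const 1), hf_one]
  calc ∫ x, -log (f x) ∂μ = ∫ x, (f x - 1 - log (f x)) - (f x - 1) ∂μ := by simp
    _ = ∫ x, f x - 1 - log (f x) ∂μ := by rw [integral_sub hrem hsub_int, hsub, sub_zero]

theorem tendsto_integral_neg_log_div_sq [IsProbabilityMeasure μ] {l : Filter κ}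
    [l.IsCountablyGenerated] {L : κ → α → ℝ} {ε : κ → ℝ} {h H : α → ℝ} {c : ℝ} (hc : 0 < c)
    (hε : Tendsto ε l (𝓝[≠] 0)) (hL_one : ∀ᶠ k in l, ∫ x, L k x ∂μ = 1)
    (hL_ge : ∀ᶠ k in l, ∀ᵐ x ∂μ, c ≤ L k x) (hH : MemLp H 2 μ)
    (hL_le : ∀ᶠ k in l, ∀ᵐ x ∂μ, |L k x - 1| ≤ |ε k| * |H x|)
    (hL_lim : ∀ᵐ x ∂μ, Tendsto (fun k ↦ (L k x - 1) / ε k) l (𝓝 (h x))) :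
    Tendsto (fun k ↦ (∫ x, -log (L k x) ∂μ) / ε k ^ 2) l (𝓝 ((∫ x, h x ^ 2 ∂μ) / 2)) := by
  have hL_int : ∀ᶠ k in l, Integrable (L k) μ := hL_one.mono fun _ ↦ integrable_of_integral_eq_one
  have hquot : (fun k ↦ (∫ x, -log (L k x) ∂μ) / ε k ^ 2) =ᶠ[l]
      fun k ↦ ∫ x, (L k x - 1 - log (L k x)) / ε k ^ 2 ∂μ := by
    filter_upwards [hL_one, hL_int, hL_ge, hL_le] with k hone hint hge hle
    have hL2 : MemLp (fun x ↦ L k x - 1) 2 μ :=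
      hH.of_le_mul (hint.sub (integrable_const 1)).aestronglyMeasurable hle
    rw [integral_neg_log_eq hc hge hL2 hone, integral_div]
  rw [tendsto_congr' hquot, ← integral_div]
  refine tendsto_integral_filter_of_dominated_convergence (fun x ↦ H x ^ 2 / c) ?_ ?_
    (hH.integrable_sq.div_const c) (hL_lim.mono fun x ↦ tendsto_sub_one_sub_log_div_sq hε)
  · filter_upwards [hL_int] with k hint
    have hmeas := hint.aemeasurable
    exact (((hmeas.sub_const 1).sub hmeas.log).div_const _).aestronglyMeasurable
  · filter_upwards [hL_ge, hL_le, hε.eventually self_mem_nhdsWithin] with k hge hle hk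
    filter_upwards [hge, hle] with x hxge hxle
    have hε_sq : 0 < ε k ^ 2 := by have : ε k ≠ 0 := hk; positivity
    rw [norm_eq_abs, abs_div, abs_of_pos hε_sq, div_le_iff₀ hε_sq]
    calc |L k x - 1 - log (L k x)| ≤ (L k x - 1) ^ 2 / c := abs_sub_one_sub_log_le hc hxge
      _ ≤ (|ε k| * |H x|) ^ 2 / c := by rw [← sq_abs]; gcongr
      _ = H x ^ 2 / c * ε k ^ 2 := by rw [mul_pow, sq_abs, sq_abs]; ring

end RelativeEntropy

section GaussianMoments

open scoped NNReal

lemma integral_pow_add_two_gaussianReal (v : ℝ≥0) (n : ℕ) :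
    ∫ x, x ^ (n + 2) ∂gaussianReal 0 v = (n + 1) * v * ∫ x, x ^ n ∂gaussianReal 0 v := by
  have hmgf : mgf id (gaussianReal 0 v) = fun t ↦ exp (v * t ^ 2 / 2) := by
    simpa using mgf_id_gaussianReal (μ := 0) (v := v)
  have hmoment (k : ℕ) :
      iteratedDeriv k (mgf id (gaussianReal 0 v)) 0 = ∫ x, x ^ k ∂gaussianReal 0 v := by
    simpa using iteratedDeriv_mgf_zero (X := id) (μ := gaussianReal 0 v)
      (by simp [integrableExpSet_id_gaussianReal]) k
  have hderiv : deriv (mgf id (gaussianReal 0 v)) =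
      fun t ↦ v * (t * mgf id (gaussianReal 0 v) t) := by
    funext t
    rw [hmgf, ((((hasDerivAt_pow 2 t).const_mul (v : ℝ)).div_const 2).exp).deriv]
    ring
  rw [← hmoment, ← hmoment, iteratedDeriv_succ', hderiv, iteratedDeriv_const_mul_field,
    iteratedDeriv_fun_mul contDiffAt_fun_id (by rw [hmgf]; fun_prop)]
  simp only [iteratedDeriv_fun_id_zero, mul_ite, mul_one, mul_zero, ite_mul, zero_mul,
    Finset.sum_ite_eq', Finset.mem_range, lt_add_iff_pos_left, Order.lt_add_one_iff, zero_le,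
    ↓reduceIte, Nat.choose_one_right, Nat.cast_add, Nat.cast_one, add_tsub_cancel_right]
  ring

lemma integrable_pow_gaussianReal (m : ℝ) (v : ℝ≥0) (n : ℕ) :
    Integrable (fun x ↦ x ^ n) (gaussianReal m v) :=
  (memLp_id_gaussianReal n).integrable_norm_pow'.mono (by fun_prop) (by simp)

lemma memLp_exp_mul_abs_gaussianReal (m : ℝ) (v : ℝ≥0) (c : ℝ) :
    MemLp (fun x ↦ exp (c * |x|)) 2 (gaussianReal m v) := by
  rw [memLp_two_iff_integrable_sq (by fun_prop)]
  simp only [← exp_nat_mul, ← mul_assoc]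
  exact integrable_exp_mul_abs (integrable_exp_mul_gaussianReal _)
    (integrable_exp_mul_gaussianReal _)

lemma integral_sq_sub_one_sq_gaussianReal :
    ∫ x, (x ^ 2 - 1) ^ 2 ∂gaussianReal 0 1 = 2 := by
  have h2 : ∫ x, x ^ 2 ∂gaussianReal 0 1 = 1 := by
    simpa using integral_pow_add_two_gaussianReal 1 0
  have h4 : ∫ x, x ^ 4 ∂gaussianReal 0 1 = 3 :=
    (integral_pow_add_two_gaussianReal 1 2).trans (by rw [h2]; norm_num)
  calc ∫ x, (x ^ 2 - 1) ^ 2 ∂gaussianReal 0 1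
      = ∫ x, x ^ 4 - 2 * x ^ 2 + 1 ∂gaussianReal 0 1 := by congr! 2 with x; ring
    _ = 3 - 2 * 1 + 1 := by
      have i2 := (integrable_pow_gaussianReal 0 1 2).const_mul 2
      have i4 := integrable_pow_gaussianReal 0 1 4
      rw [integral_add (by fun_prop) (integrable_const 1), integral_sub i4 i2, integral_const_mul,
        h2, h4]
      simp
    _ = 2 := by norm_num

end GaussianMoments

/-- The likelihood ratio `φ(x - s) / φ(x)` of `N(s,1)` with respect to `N(0,1)`, written out as an
exponential. As a function of `s` it generates the Hermite polynomials. -/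
noncomputable def gaussianTilt (s x : ℝ) : ℝ := exp (s * x - s ^ 2 / 2)

namespace gaussianTilt

lemma stdphi_sub_eq_mul (x s : ℝ) : stdphi (x - s) = stdphi x * gaussianTilt s x := by
  rw [stdphi, stdphi, gaussianTilt, mul_assoc, ← exp_add]
  ring_nf

lemma integrable (s : ℝ) : Integrable (gaussianTilt s) (gaussianReal 0 1) := by
  have h := (integrable_exp_mul_gaussianReal (μ := 0) (v := 1) s).div_const (exp (s ^ 2 / 2))
  simpa only [gaussianTilt, ← exp_sub] using! h

lemma integral_eq_one (s : ℝ) : ∫ x, gaussianTilt s x ∂gaussianReal 0 1 = 1 := by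
  have hmgf : ∫ x, exp (s * x) ∂gaussianReal 0 1 = exp (s ^ 2 / 2) := by
    simpa [mgf] using congrFun (mgf_id_gaussianReal (μ := 0) (v := 1)) s
  simp only [gaussianTilt, exp_sub, integral_div, hmgf]
  exact div_self (exp_ne_zero _)

lemma one_add_le (s x : ℝ) : 1 + s * x - s ^ 2 / 2 ≤ gaussianTilt s x := by
  rw [gaussianTilt]
  linarith [add_one_le_exp (s * x - s ^ 2 / 2)]

lemma sub_hermite_isLittleO (x : ℝ) :
    (fun s ↦ gaussianTilt s x - (1 + s * x + s ^ 2 * ((x ^ 2 - 1) / 2))) =o[𝓝 0]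
      fun s ↦ s ^ 2 := by
  have hexponent : (fun s : ℝ ↦ s * x - s ^ 2 / 2) =O[𝓝 0] fun s ↦ s := by
    have hfactor : Tendsto (fun s : ℝ ↦ x - s / 2) (𝓝 0) (𝓝 x) :=
      Continuous.tendsto' (by fun_prop) _ _ (by simp)
    simpa only [mul_sub, mul_one, sq, mul_div_assoc] using
      (isBigO_refl (fun s : ℝ ↦ s) _).mul (hfactor.isBigO_one ℝ)
  have hexponent_zero : Tendsto (fun s : ℝ ↦ s * x - s ^ 2 / 2) (𝓝 0) (𝓝 0) :=
    Continuous.tendsto' (by fun_prop) _ _ (by simp)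
  have hexp := ((exp_sub_sum_range_succ_isLittleO_pow 2).comp_tendsto hexponent_zero).trans_isBigO
    (hexponent.pow 2)
  have hcubic : (fun s : ℝ ↦ s ^ 2 * (s ^ 2 / 8 - s * x / 2)) =o[𝓝 0] fun s ↦ s ^ 2 := by
    have hfactor : Tendsto (fun s : ℝ ↦ s ^ 2 / 8 - s * x / 2) (𝓝 0) (𝓝 0) :=
      Continuous.tendsto' (by fun_prop) _ _ (by simp)
    simpa using (isBigO_refl (fun s : ℝ ↦ s ^ 2) _).mul_isLittleO ((isLittleO_one_iff ℝ).2 hfactor)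
  refine (hexp.add hcubic).congr_left fun s ↦ ?_
  simp only [Finset.sum_range_succ, Finset.sum_range_zero, pow_zero, pow_one, zero_add,
    Nat.factorial_zero, Nat.factorial_one, Nat.factorial_two, Nat.cast_one, Nat.cast_ofNat, div_one,
    Function.comp_apply, gaussianTilt]
  ring

lemma abs_sub_one_add_mul_le {s : ℝ} (hs : |s| ≤ 1) (x : ℝ) :
    |gaussianTilt s x - (1 + s * x)| ≤ s ^ 2 * (2 * exp (3 * (|x| + 1))) := by
  set a := |x| + 1
  set y := s * x - s ^ 2 / 2 with hy
  have ha : 0 ≤ a := by positivity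
  have hy_le : |y| ≤ |s| * a := abs_mul_sub_sq_half_le hs x
  have hy_le_a : |y| ≤ a := hy_le.trans (mul_le_of_le_one_left ha hs)
  calc |gaussianTilt s x - (1 + s * x)| = |exp y - 1 - y - s ^ 2 / 2| := by
        rw [gaussianTilt, ← hy, hy]; congr 1; ring
    _ ≤ |exp y - 1 - y| + |s ^ 2 / 2| := abs_sub _ _
    _ ≤ |y| ^ 2 * exp |y| + s ^ 2 / 2 := by
      rw [abs_of_nonneg (by positivity : 0 ≤ s ^ 2 / 2)]
      gcongr
      exact abs_exp_sub_one_sub_id_le_sq_mul_exp_abs y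
    _ ≤ (|s| * a) ^ 2 * exp a + s ^ 2 * 1 := by gcongr; linarith [sq_nonneg s]
    _ = s ^ 2 * (a ^ 2 * exp a + 1) := by rw [mul_pow, sq_abs]; ring
    _ ≤ s ^ 2 * (exp (3 * a) + exp (3 * a)) := by
      gcongr
      · exact sq_mul_exp_le ha
      · exact one_le_exp (by positivity)
    _ = s ^ 2 * (2 * exp (3 * a)) := by rw [two_mul]

end gaussianTilt

lemma eventually_forall_abs_smul_le_one {ι : Type*} [Finite ι] (a : ι → ℝ) :
    ∀ᶠ u : ℝ in 𝓝 0, ∀ i, |(u • a) i| ≤ 1 := by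
  refine eventually_all.2 fun i ↦ ?_
  have htendsto : Tendsto (fun u : ℝ ↦ |u * a i|) (𝓝 0) (𝓝 0) :=
    Continuous.tendsto' (by fun_prop) _ _ (by simp)
  exact htendsto.eventually_le_const one_pos

section Mixture

variable {ι : Type*} [Fintype ι] {w a : ι → ℝ}

/-- The likelihood ratio of the mixture `∑ i, w i • N(a i, 1)` with respect to `N(0,1)`, where
the weights `w` are not bundled as a probability vector. -/
noncomputable def gaussianMixtureRatio (w a : ι → ℝ) (x : ℝ) : ℝ := ∑ i, w i * gaussianTilt (a i) x

namespace gaussianMixtureRatio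

lemma integral_eq_one (hw : ∑ i, w i = 1) (a : ι → ℝ) :
    ∫ x, gaussianMixtureRatio w a x ∂gaussianReal 0 1 = 1 := by
  simp only [gaussianMixtureRatio]
  rw [integral_finsetSum _ fun i _ ↦ (gaussianTilt.integrable (a i)).const_mul (w i)]
  simp [integral_const_mul, gaussianTilt.integral_eq_one, hw]

lemma one_sub_le (hw_nonneg : ∀ i, 0 ≤ w i) (hw : ∑ i, w i = 1) (ha : ∑ i, w i * a i = 0)
    (x : ℝ) : 1 - (∑ i, w i * a i ^ 2) / 2 ≤ gaussianMixtureRatio w a x :=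
  calc 1 - (∑ i, w i * a i ^ 2) / 2
      = ∑ i, w i + (∑ i, w i * a i) * x - (∑ i, w i * a i ^ 2) / 2 := by rw [hw, ha]; ring
    _ = ∑ i, w i * (1 + a i * x - a i ^ 2 / 2) := by
      rw [Finset.sum_mul, Finset.sum_div, ← Finset.sum_add_distrib, ← Finset.sum_sub_distrib]
      congr! 1 with i
      ring
    _ ≤ gaussianMixtureRatio w a x := by
      unfold gaussianMixtureRatio
      gcongr with i
      · exact hw_nonneg i
      · exact gaussianTilt.one_add_le _ _

lemma sub_one_eq (hw : ∑ i, w i = 1) (ha : ∑ i, w i * a i = 0) (x : ℝ) :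
    gaussianMixtureRatio w a x - 1 = ∑ i, w i * (gaussianTilt (a i) x - (1 + a i * x)) := by
  simp only [gaussianMixtureRatio, mul_sub, mul_add, mul_one, Finset.sum_sub_distrib,
    Finset.sum_add_distrib, ← mul_assoc, ← Finset.sum_mul, hw, ha]
  ring

lemma abs_sub_one_le (hw_nonneg : ∀ i, 0 ≤ w i) (hw : ∑ i, w i = 1) (ha : ∑ i, w i * a i = 0)
    (ha_le : ∀ i, |a i| ≤ 1) (x : ℝ) :
    |gaussianMixtureRatio w a x - 1| ≤ (∑ i, w i * a i ^ 2) * (2 * exp (3 * (|x| + 1))) := by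
  rw [sub_one_eq hw ha, Finset.sum_mul]
  refine (Finset.abs_sum_le_sum_abs _ _).trans (Finset.sum_le_sum fun i _ ↦ ?_)
  rw [abs_mul, abs_of_nonneg (hw_nonneg i), mul_assoc]
  exact mul_le_mul_of_nonneg_left (gaussianTilt.abs_sub_one_add_mul_le (ha_le i) x) (hw_nonneg i)

lemma one_half_le (hw_nonneg : ∀ i, 0 ≤ w i) (hw : ∑ i, w i = 1) (ha : ∑ i, w i * a i = 0)
    (ha_le : ∀ i, |a i| ≤ 1) (x : ℝ) : 1 / 2 ≤ gaussianMixtureRatio w a x := by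
  have hsecond : ∑ i, w i * a i ^ 2 ≤ 1 :=
    calc ∑ i, w i * a i ^ 2 ≤ ∑ i, w i := Finset.sum_le_sum fun i _ ↦
          mul_le_of_le_one_right (hw_nonneg i) ((sq_le_one_iff_abs_le_one _).2 (ha_le i))
      _ = 1 := hw
  linarith [one_sub_le hw_nonneg hw ha x]

lemma sub_hermite_isLittleO (w a : ι → ℝ) (x : ℝ) :
    (fun u : ℝ ↦ gaussianMixtureRatio w (u • a) x - (∑ i, w i + u * (∑ i, w i * a i) * x
      + u ^ 2 * ((∑ i, w i * a i ^ 2) * ((x ^ 2 - 1) / 2)))) =o[𝓝 0] fun u ↦ u ^ 2 := by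
  have hterm (i : ι) : (fun u : ℝ ↦ w i * (gaussianTilt (u * a i) x
      - (1 + u * a i * x + (u * a i) ^ 2 * ((x ^ 2 - 1) / 2)))) =o[𝓝 0] fun u ↦ u ^ 2 := by
    have hscale : Tendsto (fun u : ℝ ↦ u * a i) (𝓝 0) (𝓝 0) :=
      Continuous.tendsto' (by fun_prop) _ _ (zero_mul _)
    have hsq : (fun u : ℝ ↦ (u * a i) ^ 2) =O[𝓝 0] fun u ↦ u ^ 2 := by
      simpa only [mul_comm, id] using ((isBigO_refl (id : ℝ → ℝ) _).const_mul_left (a i)).pow 2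
    exact (((gaussianTilt.sub_hermite_isLittleO x).comp_tendsto hscale).trans_isBigO
      hsq).const_mul_left _
  refine (IsLittleO.sum (s := Finset.univ) fun i _ ↦ hterm i).congr_left fun u ↦ ?_
  simp only [gaussianMixtureRatio, Finset.sum_apply, Pi.smul_apply, smul_eq_mul, Finset.mul_sum,
    Finset.sum_mul, ← Finset.sum_add_distrib, ← Finset.sum_sub_distrib]
  congr! 1 with i
  ring

lemma tendsto_sub_one_div_sq (hw : ∑ i, w i = 1) (ha : ∑ i, w i * a i = 0) (x : ℝ) :
    Tendsto (fun u : ℝ ↦ (gaussianMixtureRatio w (u • a) x - 1) / u ^ 2) (𝓝[≠] 0)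
      (𝓝 ((∑ i, w i * a i ^ 2) * ((x ^ 2 - 1) / 2))) := by
  have hrem := ((sub_hermite_isLittleO w a x).mono
    (nhdsWithin_le_nhds (s := {0}ᶜ))).tendsto_div_nhds_zero
  rw [hw, ha] at hrem
  refine (zero_add ((∑ i, w i * a i ^ 2) * ((x ^ 2 - 1) / 2)) ▸ hrem.add_const _).congr' ?_
  filter_upwards [self_mem_nhdsWithin] with u (hu : u ≠ 0)
  field

lemma tendsto_integral_neg_log_div_pow_four (hw_nonneg : ∀ i, 0 ≤ w i) (hw : ∑ i, w i = 1)
    (ha : ∑ i, w i * a i = 0) :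
    Tendsto (fun u : ℝ ↦ (∫ x, -log (gaussianMixtureRatio w (u • a) x) ∂gaussianReal 0 1) / u ^ 4)
      (𝓝[≠] 0) (𝓝 ((∑ i, w i * a i ^ 2) ^ 2 / 4)) := by
  set m := ∑ i, w i * a i ^ 2 with hm
  have ha_smul (u : ℝ) : ∑ i, w i * (u • a) i = 0 := by
    simp [mul_left_comm _ u, ← Finset.mul_sum, ha]
  have hm_smul (u : ℝ) : ∑ i, w i * (u • a) i ^ 2 = u ^ 2 * m := by
    simp [hm, mul_pow, mul_left_comm _ (u ^ 2), Finset.mul_sum]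
  have hsmall : ∀ᶠ u : ℝ in 𝓝[≠] 0, ∀ i, |(u • a) i| ≤ 1 :=
    nhdsWithin_le_nhds (eventually_forall_abs_smul_le_one a)
  have hsq : Tendsto (fun u : ℝ ↦ u ^ 2) (𝓝[≠] 0) (𝓝[≠] 0) := by
    simpa using (continuousAt_pow (0 : ℝ) 2).continuousWithinAt.tendsto_nhdsWithin
      (s := {0}ᶜ) (t := {0}ᶜ) fun u hu ↦ pow_ne_zero 2 hu
  have hlim (x : ℝ) : Tendsto (fun u : ℝ ↦ (gaussianMixtureRatio w (u • a) x - 1) / u ^ 2)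
      (𝓝[≠] 0) (𝓝 (m * ((x ^ 2 - 1) / 2))) := tendsto_sub_one_div_sq hw ha x
  have hH : MemLp (fun x ↦ m * (2 * exp (3 * (|x| + 1)))) 2 (gaussianReal 0 1) := by
    simp only [mul_add, exp_add, ← mul_assoc]
    exact ((memLp_exp_mul_abs_gaussianReal 0 1 3).const_mul _).mul_const _
  have hbound : ∀ᶠ u : ℝ in 𝓝[≠] 0, ∀ x,
      |gaussianMixtureRatio w (u • a) x - 1| ≤ |u ^ 2| * |m * (2 * exp (3 * (|x| + 1)))| := by
    filter_upwards [hsmall] with u hu x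
    rw [← abs_mul, ← mul_assoc, ← hm_smul]
    exact (abs_sub_one_le hw_nonneg hw (ha_smul u) hu x).trans (le_abs_self _)
  have hentropy := tendsto_integral_neg_log_div_sq one_half_pos hsq
    (.of_forall fun u ↦ integral_eq_one hw (u • a))
    (hsmall.mono fun u hu ↦ .of_forall (one_half_le hw_nonneg hw (ha_smul u) hu)) hH
    (hbound.mono fun u hu ↦ .of_forall hu) (.of_forall hlim)
  have hconst : (∫ x, (m * ((x ^ 2 - 1) / 2)) ^ 2 ∂gaussianReal 0 1) / 2 = m ^ 2 / 4 := by
    simp only [mul_pow, div_pow, integral_const_mul, integral_div,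
      integral_sq_sub_one_sq_gaussianReal]
    ring
  simpa only [hconst, ← pow_mul, Nat.reduceMul] using hentropy

end gaussianMixtureRatio

end Mixture

lemma fX_eq_neg_log_gaussianMixtureRatio (q x u : ℝ) :
    fX q x u = -log (gaussianMixtureRatio ![q, 1 - q] (u • ![1 - q, -q]) x) := by
  have hφ : stdphi x ≠ 0 := by unfold stdphi; positivity
  rw [fX, ← log_inv, ← sub_neg_eq_add x (q * u), gaussianTilt.stdphi_sub_eq_mul,
    gaussianTilt.stdphi_sub_eq_mul]
  congr 1
  simp only [gaussianMixtureRatio, Fin.sum_univ_two, Pi.smul_apply, smul_eq_mul, mul_comm u,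
    Matrix.cons_val_zero, Matrix.cons_val_one, neg_mul]
  field_simp

open Filter Topology Asymptotics in
/-- For `x ∼ N(0,1)`, `E_x[f_x(u)]/u⁴ → (1/4)(1−q)²q²` as `u → 0`; in particular
`E_x[f_x(u)] = O(u⁴)` as `u → 0`. -/
theorem integral_fX_div_u4_tendsto (q : ℝ) (hq : q ∈ Set.Ioc (0 : ℝ) 1) :
    Tendsto (fun u : ℝ => (∫ x, fX q x u ∂(gaussianReal 0 1)) / u ^ 4) (𝓝[≠] 0)
        (𝓝 ((1 / 4) * (1 - q) ^ 2 * q ^ 2)) ∧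
      (fun u : ℝ => ∫ x, fX q x u ∂(gaussianReal 0 1)) =O[𝓝 0] fun u : ℝ => u ^ 4 := by
  have hlim : Tendsto (fun u : ℝ => (∫ x, fX q x u ∂(gaussianReal 0 1)) / u ^ 4) (𝓝[≠] 0)
      (𝓝 ((1 / 4) * (1 - q) ^ 2 * q ^ 2)) := by
    simp_rw [fX_eq_neg_log_gaussianMixtureRatio]
    convert gaussianMixtureRatio.tendsto_integral_neg_log_div_pow_four
      (w := ![q, 1 - q]) (a := ![1 - q, -q]) ?_ ?_ ?_ using 2
    · simp only [Fin.sum_univ_two, Matrix.cons_val_zero, Matrix.cons_val_one]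
      ring
    · simp [Fin.forall_fin_two, hq.1.le, hq.2]
    · simp
    · simp only [Fin.sum_univ_two, Matrix.cons_val_zero, Matrix.cons_val_one]
      ring
  have hzero (x : ℝ) : fX q x 0 = 0 := by
    simp [fX_eq_neg_log_gaussianMixtureRatio, gaussianMixtureRatio, gaussianTilt]
  refine ⟨hlim, ?_⟩
  rw [← nhdsNE_sup_pure, isBigO_sup, isBigO_pure]
  refine ⟨isBigO_of_div_tendsto_nhds ?_ _ hlim, fun _ ↦ by simp [hzero]⟩
  filter_upwards [self_mem_nhdsWithin] with u hu h using absurd h (pow_ne_zero 4 hu)
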